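/- Let f0 = sup_{k≥0} 2^{k−2^k} χ_{[0,2^{2^k})}, a(t,f0) = (1/log(1+t)) ∫_0^t f0(s) ds, and (Mg)(t) = (1/log t) ∫_1^t g(s) ds/s for t > 1. Then limsup_{t→∞} a(t,f0) > limsup_{t→∞} (M a(·,f0))(t); in fact limsup_{t→∞} a(t,f0) ≥ 2/log 2 > 4/(e·log 2) = limsup_{t→∞} (M a(·,f0))(t). -/

import Mathlib

open MeasureTheory Filter Set

/-- `f0 = sup_{k ≥ 0} 2^(k - 2^k) χ_[0, 2^(2^k))`. -/
noncomputable def f0 : ℝ → ℝ := fun t =>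
  ⨆ k : ℕ, if t < (2:ℝ) ^ (2 ^ k) then (2:ℝ) ^ ((k : ℤ) - 2 ^ k) else 0

/-- `a(t, f0) = (1/log(1+t)) ∫_0^t f0(s) ds`. -/
noncomputable def aF : ℝ → ℝ := fun t => (∫ s in (0:ℝ)..t, f0 s) / Real.log (1 + t)

/-- The logarithmic Cesàro mean `(Mg)(t) = (1/log t) ∫_1^t g(s) ds/s`. -/
noncomputable def Mop (g : ℝ → ℝ) (t : ℝ) : ℝ := (∫ s in (1:ℝ)..t, g s / s) / Real.log t

noncomputable def TT (k : ℕ) : ℝ := (2:ℝ) ^ (2 ^ k)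

lemma TT_pos (k : ℕ) : 0 < TT k := by unfold TT; positivity

lemma TT_succ (k : ℕ) : TT (k+1) = TT k * TT k := by
  unfold TT; rw [← pow_add]; congr 1; ring

lemma TT_zero : TT 0 = 2 := by simp [TT]

lemma TT_mono : Monotone TT := by
  intro a b h
  unfold TT
  exact pow_le_pow_right₀ (by norm_num) (Nat.pow_le_pow_right (by norm_num) h)

lemma TT_ge (k : ℕ) : 2 ≤ TT k := by
  rw [← TT_zero]; exact TT_mono (Nat.zero_le k)

lemma TT_ge_four (k : ℕ) : (2:ℝ)^k * 2^k ≤ TT k := by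
  unfold TT
  rw [← pow_add]
  refine pow_le_pow_right₀ (by norm_num) ?_
  rcases k with _ | k
  · simp
  · have := @Nat.lt_two_pow_self k
    rw [pow_succ]; omega

lemma log_TT (k : ℕ) : Real.log (TT k) = 2^k * Real.log 2 := by
  unfold TT; rw [Real.log_pow]; push_cast; ring

lemma cc_anti : Antitone (fun j : ℕ => (2:ℝ)^j / TT j) := by
  apply antitone_nat_of_succ_le
  intro n
  have h := TT_ge n
  have h0 := TT_pos n
  rw [TT_succ, div_le_div_iff₀ (by positivity) h0, pow_succ]
  have : (0:ℝ) < 2^n := by positivity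
  have h3 : 0 ≤ (TT n - 2) * ((2:ℝ)^n * TT n) := mul_nonneg (by linarith) (by positivity)
  nlinarith

lemma f0_eq (t : ℝ) : f0 t = ⨆ k : ℕ, if t < TT k then (2:ℝ)^k / TT k else 0 := by
  unfold f0 TT
  congr 1; ext k
  congr 1
  rw [zpow_sub₀ (by norm_num)]
  norm_cast

lemma term_le (t : ℝ) (k : ℕ) : (if t < TT k then (2:ℝ)^k / TT k else 0) ≤ 1 := by
  split_ifs
  · have h := cc_anti (Nat.zero_le k)
    simp only [TT_zero] at h
    norm_num at h
    linarith
  · norm_num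

lemma term_nonneg (t : ℝ) (k : ℕ) : 0 ≤ (if t < TT k then (2:ℝ)^k / TT k else 0) := by
  have := TT_pos k
  split_ifs <;> positivity

lemma term_bdd (t : ℝ) :
    BddAbove (range fun k : ℕ => if t < TT k then (2:ℝ)^k / TT k else 0) :=
  ⟨1, by rintro _ ⟨k, rfl⟩; exact term_le t k⟩

lemma f0_le (t : ℝ) : f0 t ≤ 1 := by
  rw [f0_eq]; exact ciSup_le (term_le t)

lemma f0_nonneg (t : ℝ) : 0 ≤ f0 t := by
  rw [f0_eq]; exact Real.iSup_nonneg (term_nonneg t)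

lemma f0_anti : Antitone f0 := by
  intro s t h
  rw [f0_eq, f0_eq]
  refine ciSup_mono (term_bdd s) ?_
  intro k
  have := TT_pos k
  by_cases h1 : t < TT k
  · rw [if_pos h1, if_pos (by linarith)]
  · rw [if_neg h1]; exact term_nonneg s k

lemma f0_val (k : ℕ) (t : ℝ) (h1 : TT k ≤ t) (h2 : t < TT (k+1)) :
    f0 t = 2^(k+1) / TT (k+1) := by
  rw [f0_eq]
  apply le_antisymm
  · refine ciSup_le ?_
    intro j
    split_ifs with h
    · apply cc_anti
      by_contra hj
      have := TT_mono (show j ≤ k by omega)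
      linarith
    · have := TT_pos (k+1)
      positivity
  · have := le_ciSup (term_bdd t) (k+1)
    simp only [if_pos h2] at this
    exact this

lemma f0_int (a b : ℝ) : IntervalIntegrable f0 volume a b := f0_anti.intervalIntegrable

noncomputable def FF (t : ℝ) : ℝ := ∫ s in (0:ℝ)..t, f0 s

lemma FF_cont : Continuous FF := intervalIntegral.continuous_primitive (fun a b => f0_int a b) 0

lemma FF_on (k : ℕ) (t : ℝ) (h1 : TT k ≤ t) (h2 : t ≤ TT (k+1)) :
    FF t = FF (TT k) + 2^(k+1) / TT (k+1) * (t - TT k) := by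
  unfold FF
  rw [← intervalIntegral.integral_add_adjacent_intervals (f0_int 0 (TT k)) (f0_int (TT k) t)]
  congr 1
  have : ∫ s in (TT k)..t, f0 s = ∫ s in (TT k)..t, (2:ℝ)^(k+1) / TT (k+1) := by
    apply intervalIntegral.integral_congr_ae
    have : ∀ᵐ x : ℝ, x ≠ TT (k+1) := by simp [ae_iff]
    filter_upwards [this] with x hx hx2
    rw [uIoc_of_le h1] at hx2
    exact f0_val k x hx2.1.le (lt_of_le_of_ne (hx2.2.trans h2) hx)
  rw [this]; simp; ring

lemma FF_two_nonneg : 0 ≤ FF 2 :=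
  intervalIntegral.integral_nonneg (by norm_num) (fun x _ => f0_nonneg x)

lemma FF_two_le : FF 2 ≤ 2 := by
  have := intervalIntegral.integral_mono_on (a := 0) (b := 2) (by norm_num) (f0_int 0 2)
    (intervalIntegrable_const (c := (1:ℝ))) (fun x _ => f0_le x)
  simpa [FF] using this

lemma FF_TT (k : ℕ) : FF (TT k) ≤ 2^(k+1) ∧ (2:ℝ)^(k+1) - 6 + 4 / 2^k ≤ FF (TT k) := by
  induction k with
  | zero =>
    rw [TT_zero]; have := FF_two_le; have := FF_two_nonneg
    constructor <;> norm_num <;> linarith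
  | succ k ih =>
    have hm := TT_mono (Nat.le_succ k)
    have h0 := TT_pos k
    rw [FF_on k (TT (k+1)) hm le_rfl, TT_succ]
    have e : (2:ℝ)^(k+1) / (TT k * TT k) * (TT k * TT k - TT k) = 2^(k+1) - 2^(k+1) / TT k := by
      field_simp
    rw [e]
    have h1 : 0 ≤ (2:ℝ)^(k+1) / TT k := by positivity
    have h2 : (2:ℝ)^(k+1) / TT k ≤ 2 / 2^k := by
      rw [div_le_div_iff₀ h0 (by positivity), pow_succ]
      have := TT_ge_four k
      linarith
    have e2 : (4:ℝ) / 2^(k+1) = 2 / 2^k := by rw [pow_succ]; field_simp; norm_num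
    have e3 : (4:ℝ) / 2^k = 2 * (2 / 2^k) := by ring
    rw [e2]
    rw [e3] at ih
    have e4 : (2:ℝ)^(k+1+1) = 2^(k+1) + 2^(k+1) := by ring
    rw [e4]
    constructor <;> linarith [ih.1, ih.2]

lemma FF_le (k : ℕ) (t : ℝ) (h1 : TT k ≤ t) (h2 : t ≤ TT (k+1)) :
    FF t ≤ 2^(k+1) + 2^(k+1) * t / TT (k+1) := by
  rw [FF_on k t h1 h2]
  have := (FF_TT k).1
  have h0 := TT_pos k
  have h3 := TT_pos (k+1)
  have : 0 ≤ (2:ℝ)^(k+1) / TT (k+1) * TT k := by positivity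
  have e : (2:ℝ)^(k+1) / TT (k+1) * (t - TT k) = 2^(k+1) * t / TT (k+1) - 2^(k+1) / TT (k+1) * TT k := by ring
  linarith

lemma FF_ge (k : ℕ) (t : ℝ) (h1 : TT k ≤ t) (h2 : t ≤ TT (k+1)) :
    (2:ℝ)^(k+1) - 6 ≤ FF t := by
  rw [FF_on k t h1 h2]
  have := (FF_TT k).2
  have h3 := TT_pos (k+1)
  have : 0 ≤ (2:ℝ)^(k+1) / TT (k+1) * (t - TT k) := mul_nonneg (by positivity) (by linarith)
  have : (0:ℝ) ≤ 4 / 2^k := by positivity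
  linarith

lemma FF_nonneg (t : ℝ) (h : 0 ≤ t) : 0 ≤ FF t :=
  intervalIntegral.integral_nonneg h (fun x _ => f0_nonneg x)

lemma aF_eq (t : ℝ) : aF t = FF t / Real.log (1 + t) := rfl

lemma exists_TT (N : ℕ) (t : ℝ) (h : TT N ≤ t) : ∃ n, N ≤ n ∧ TT n ≤ t ∧ t ≤ TT (n+1) := by
  by_contra hc
  push Not at hc
  have : ∀ m, TT (N + m) ≤ t := by
    intro m
    induction m with
    | zero => simpa using h
    | succ m ih => exact (hc (N+m) (by omega) ih).le
  obtain ⟨m, hm⟩ := pow_unbounded_of_one_lt t (show (1:ℝ) < 2 by norm_num)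
  have h1 := this m
  have h2 := TT_ge_four (N+m)
  have h3 : (2:ℝ)^m ≤ 2^(N+m) := pow_le_pow_right₀ (by norm_num) (by omega)
  have h4 : (1:ℝ) ≤ 2^(N+m) := one_le_pow₀ (by norm_num)
  nlinarith

lemma log_bd (k : ℕ) (s : ℝ) (h1 : TT k ≤ s) :
    2^k * Real.log 2 ≤ Real.log s ∧ 0 < Real.log s ∧ (2:ℝ)^(k+1) ≤ 3 * Real.log s := by
  have h := Real.log_le_log (TT_pos k) h1
  rw [log_TT] at h
  have h2 : (0.6931471803:ℝ) < Real.log 2 := Real.log_two_gt_d9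
  have h3 : (0:ℝ) < 2^k := by positivity
  have h4 : (2:ℝ)^k * (2/3) ≤ 2^k * Real.log 2 := by gcongr; linarith
  refine ⟨h, by linarith, ?_⟩
  rw [pow_succ]; linarith

lemma log_one_add_le (s : ℝ) (h : 0 < s) : Real.log (1+s) ≤ Real.log s + 1 / s := by
  have e : 1 + s = s * (1 + 1/s) := by field_simp; ring
  rw [e, Real.log_mul (by positivity) (by positivity)]
  have := Real.log_le_sub_one_of_pos (show 0 < 1 + 1/s by positivity)
  linarith

lemma ptw_le (k : ℕ) (s : ℝ) (h1 : TT k ≤ s) (h2 : s ≤ TT (k+1)) :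
    aF s / s ≤ 2^(k+1) * (1 / (s * Real.log s)) + 3 / TT (k+1) := by
  obtain ⟨ha, hb, hc⟩ := log_bd k s h1
  have hs := (TT_ge k).trans h1
  have hF := FF_le k s h1 h2
  have hT := TT_pos (k+1)
  have h0 := FF_nonneg s (by linarith)
  have hl : Real.log s ≤ Real.log (1+s) := Real.log_le_log (by linarith) (by linarith)
  have hs0 : 0 < s := by linarith
  rw [aF_eq]
  calc FF s / Real.log (1+s) / s ≤ FF s / Real.log s / s := by gcongr
    _ ≤ (2^(k+1) + 2^(k+1) * s / TT (k+1)) / Real.log s / s := by gcongr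
    _ = 2^(k+1) * (1 / (s * Real.log s)) + (2^(k+1) / Real.log s) / TT (k+1) := by
      field_simp
    _ ≤ _ := by
      gcongr
      rw [div_le_iff₀ hb]; exact hc

lemma ptw_ge (k : ℕ) (s : ℝ) (h1 : TT k ≤ s) (h2 : s ≤ TT (k+1)) :
    (2^(k+1) - 8) * (1 / (s * Real.log s)) ≤ aF s / s := by
  obtain ⟨ha, hb, hc⟩ := log_bd k s h1
  have hs := (TT_ge k).trans h1
  have hF := FF_ge k s h1 h2
  have hl : Real.log s ≤ Real.log (1+s) := Real.log_le_log (by linarith) (by linarith)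
  have hs0 : 0 < s := by linarith
  have hl2 := log_one_add_le s hs0
  have hl0 : 0 < Real.log (1+s) := by linarith
  rw [aF_eq]
  have e : ((2:ℝ)^(k+1) - 8) * (1 / (s * Real.log s)) = (2^(k+1) - 8) / Real.log s / s := by
    field_simp
  rw [e]
  gcongr ?_ / s
  rw [div_le_div_iff₀ hb hl0]
  refine le_trans ?_ (mul_le_mul_of_nonneg_right hF hb.le)
  generalize (2:ℝ)^(k+1) = P at *
  have h3 : 1 / s ≤ 1/2 := one_div_le_one_div_of_le (by norm_num) hs
  have h4 : 0 < 1 / s := by positivity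
  rcases le_total 8 P with h | h
  · have : (P - 8) * Real.log (1+s) ≤ (P - 8) * (Real.log s + 1/s) :=
      mul_le_mul_of_nonneg_left hl2 (by linarith)
    have : (P - 8) * (1/s) ≤ (P-8) * (1/2) := mul_le_mul_of_nonneg_left h3 (by linarith)
    nlinarith
  · have : (8 - P) * Real.log s ≤ (8 - P) * Real.log (1+s) :=
      mul_le_mul_of_nonneg_left hl (by linarith)
    nlinarith

lemma inv_cont (a b : ℝ) (ha : 1 < a) (hab : a ≤ b) :
    ContinuousOn (fun s : ℝ => 1 / (s * Real.log s)) (uIcc a b) := by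
  rw [uIcc_of_le hab]
  have h0 : ∀ x ∈ Icc a b, x ≠ 0 := fun x hx => by have := hx.1; intro h; linarith
  refine ContinuousOn.div continuousOn_const ?_ ?_
  · exact continuousOn_id.mul (Real.continuousOn_log.mono (fun x hx => h0 x hx))
  · intro x hx
    have := Real.log_pos (show 1 < x by linarith [hx.1])
    exact mul_ne_zero (h0 x hx) this.ne'

lemma inv_int (a b : ℝ) (ha : 1 < a) (hab : a ≤ b) :
    ∫ s in a..b, 1 / (s * Real.log s) = Real.log (Real.log b) - Real.log (Real.log a) := by
  apply intervalIntegral.integral_eq_sub_of_hasDerivAt (f := fun s => Real.log (Real.log s))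
  · intro x hx
    rw [uIcc_of_le hab] at hx
    have hx1 : 1 < x := by linarith [hx.1]
    have := Real.log_pos hx1
    have h := (Real.hasDerivAt_log (show x ≠ 0 by linarith)).log this.ne'
    have e : 1 / (x * Real.log x) = x⁻¹ / Real.log x := by
      rw [one_div, mul_inv, div_eq_mul_inv]
    rw [e]; exact h
  · exact (inv_cont a b ha hab).intervalIntegrable

noncomputable def GG (t : ℝ) : ℝ := ∫ s in (1:ℝ)..t, aF s / s

lemma GG_ii (a b : ℝ) (ha : 1 ≤ a) (hab : a ≤ b) :
    IntervalIntegrable (fun s => aF s / s) volume a b := by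
  apply ContinuousOn.intervalIntegrable
  rw [uIcc_of_le hab]
  have h0 : ∀ x ∈ Icc a b, 1 ≤ x := fun x hx => by linarith [hx.1]
  refine ContinuousOn.div ?_ continuousOn_id ?_
  · refine ContinuousOn.div (FF_cont.continuousOn) ?_ ?_
    · refine ContinuousOn.log (by fun_prop) ?_
      intro x hx; have := h0 x hx; linarith
    · intro x hx
      have := h0 x hx
      exact (Real.log_pos (by linarith)).ne'
  · intro x hx; have := h0 x hx; simp; linarith

lemma GG_add (a b : ℝ) (ha : 1 ≤ a) (hab : a ≤ b) :
    GG b = GG a + ∫ s in a..b, aF s / s :=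
  (intervalIntegral.integral_add_adjacent_intervals (GG_ii 1 a le_rfl ha) (GG_ii a b ha hab)).symm

lemma GG_le_step (k : ℕ) (t : ℝ) (h1 : TT k ≤ t) (h2 : t ≤ TT (k+1)) :
    GG t ≤ GG (TT k) + 2^(k+1) * (Real.log (Real.log t) - Real.log (Real.log (TT k))) + 3 := by
  have hk := TT_ge k
  have hT := TT_pos (k+1)
  rw [GG_add (TT k) t (by linarith) h1, add_assoc]
  gcongr
  have hi := (inv_cont (TT k) t (by linarith) h1).intervalIntegrable (μ := volume)
  have := intervalIntegral.integral_mono_on h1 (GG_ii (TT k) t (by linarith) h1)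
    ((hi.const_mul (2^(k+1))).add (intervalIntegrable_const (c := 3 / TT (k+1))))
    (fun x hx => ptw_le k x hx.1 (hx.2.trans h2))
  refine this.trans ?_
  rw [intervalIntegral.integral_add (hi.const_mul _) intervalIntegrable_const,
    intervalIntegral.integral_const_mul, inv_int _ _ (by linarith) h1]
  gcongr
  simp only [intervalIntegral.integral_const, smul_eq_mul]
  rw [mul_div_assoc', div_le_iff₀ hT]
  linarith

lemma GG_ge_step (k : ℕ) (t : ℝ) (h1 : TT k ≤ t) (h2 : t ≤ TT (k+1)) :
    GG (TT k) + (2^(k+1) - 8) * (Real.log (Real.log t) - Real.log (Real.log (TT k))) ≤ GG t := by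
  have hk := TT_ge k
  rw [GG_add (TT k) t (by linarith) h1]
  gcongr
  have hi := (inv_cont (TT k) t (by linarith) h1).intervalIntegrable (μ := volume)
  have := intervalIntegral.integral_mono_on h1 
    (hi.const_mul (2^(k+1)-8)) (GG_ii (TT k) t (by linarith) h1)
    (fun x hx => ptw_ge k x hx.1 (hx.2.trans h2))
  refine le_trans ?_ this
  rw [intervalIntegral.integral_const_mul, inv_int _ _ (by linarith) h1]

lemma loglog_TT (k : ℕ) : Real.log (Real.log (TT k)) = k * Real.log 2 + Real.log (Real.log 2) := by
  have : 0 < Real.log 2 := Real.log_pos (by norm_num)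
  rw [log_TT, Real.log_mul (by positivity) this.ne', Real.log_pow]

lemma GG_TT (n : ℕ) : GG (TT n) ≤ 2^(n+1) * Real.log 2 + 3 * n + GG 2 ∧
    2^(n+1) * Real.log 2 - 8 * (n+1) + GG 2 ≤ GG (TT n) := by
  have hl : 0 < Real.log 2 := Real.log_pos (by norm_num)
  have hl1 : Real.log 2 < 1 := by linarith [Real.log_two_lt_d9]
  induction n with
  | zero => rw [TT_zero]; norm_num; constructor <;> linarith
  | succ k ih =>
    have hm := TT_mono (Nat.le_succ k)
    have u := GG_le_step k _ hm le_rfl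
    have l := GG_ge_step k _ hm le_rfl
    rw [loglog_TT, loglog_TT] at u l
    push_cast at u l ⊢
    have e4 : (2:ℝ)^(k+1+1) = 2^(k+1) + 2^(k+1) := by ring
    rw [e4]
    constructor
    · nlinarith [ih.1]
    · nlinarith [ih.2]

lemma GG_bd (n : ℕ) (t : ℝ) (h1 : TT n ≤ t) (h2 : t ≤ TT (n+1)) :
    GG t ≤ 2^(n+1) * Real.log (2 * Real.log t / (2^n * Real.log 2)) + 3 * (n+1) + GG 2 ∧
    2^(n+1) * Real.log (2 * Real.log t / (2^n * Real.log 2)) - 8 * (n+2) + GG 2 ≤ GG t := by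
  have hl : 0 < Real.log 2 := Real.log_pos (by norm_num)
  have hl1 : Real.log 2 < 1 := by linarith [Real.log_two_lt_d9]
  obtain ⟨ha, hb, hc⟩ := log_bd n t h1
  have u := GG_le_step n t h1 h2
  have l := GG_ge_step n t h1 h2
  have g := GG_TT n
  have h3 : Real.log (Real.log t) ≤ Real.log (Real.log (TT (n+1))) := by
    have := TT_pos n
    exact Real.log_le_log hb (Real.log_le_log (by linarith) h2)
  have e : Real.log (2 * Real.log t / (2^n * Real.log 2)) =
    Real.log 2 + (Real.log (Real.log t) - Real.log (Real.log (TT n))) := by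
    rw [Real.log_div (by positivity) (by positivity), Real.log_mul (by positivity) (by positivity),
      log_TT]
    ring
  rw [e]
  rw [loglog_TT] at h3
  push_cast at h3
  have e2 := loglog_TT n
  constructor
  · nlinarith [g.1]
  · nlinarith [g.2]

lemma log_div_le (z : ℝ) (hz : 0 < z) : Real.log z ≤ z / Real.exp 1 := by
  have := Real.log_le_sub_one_of_pos (show 0 < z / Real.exp 1 by positivity)
  rw [Real.log_div hz.ne' (by positivity), Real.log_exp] at this
  linarith

lemma Mop_eq (t : ℝ) : Mop aF t = GG t / Real.log t := rfl

noncomputable def er (n : ℕ) : ℝ := (8 * (n+2) + |GG 2|) / (2^n * Real.log 2)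

lemma er_tendsto : Tendsto er atTop (nhds 0) := by
  have hl : 0 < Real.log 2 := Real.log_pos (by norm_num)
  have h1 : Tendsto (fun n : ℕ => (n:ℝ) / 2^n) atTop (nhds 0) := by
    simpa using tendsto_pow_const_div_const_pow_of_one_lt 1 (show (1:ℝ) < 2 by norm_num)
  have h2 : Tendsto (fun n : ℕ => (1:ℝ) / 2^n) atTop (nhds 0) := by
    simpa using tendsto_pow_const_div_const_pow_of_one_lt 0 (show (1:ℝ) < 2 by norm_num)
  have := (h1.const_mul (8 / Real.log 2)).add (h2.const_mul ((16 + |GG 2|) / Real.log 2))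
  simp only [mul_zero, add_zero] at this
  refine this.congr ?_
  intro n
  unfold er
  field_simp
  ring

lemma Mop_le (n : ℕ) (t : ℝ) (h1 : TT n ≤ t) (h2 : t ≤ TT (n+1)) :
    Mop aF t ≤ 4 / (Real.exp 1 * Real.log 2) + er n := by
  have hl : 0 < Real.log 2 := Real.log_pos (by norm_num)
  obtain ⟨ha, hb, hc⟩ := log_bd n t h1
  have g := (GG_bd n t h1 h2).1
  have hz := log_div_le (2 * Real.log t / (2^n * Real.log 2)) (by positivity)
  have h3 : GG t ≤ 2^(n+1) * (2 * Real.log t / (2^n * Real.log 2) / Real.exp 1)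
      + (8 * (n+2) + |GG 2|) := by
    have := mul_le_mul_of_nonneg_left hz (show (0:ℝ) ≤ 2^(n+1) by positivity)
    have := le_abs_self (GG 2)
    have : (0:ℝ) ≤ n := by positivity
    linarith
  rw [Mop_eq]
  have h4 : (8 * ((n:ℝ)+2) + |GG 2|) / Real.log t ≤ er n := by
    unfold er; gcongr
  calc GG t / Real.log t ≤ _ := div_le_div_of_nonneg_right h3 hb.le
    _ = 4 / (Real.exp 1 * Real.log 2) + (8 * ((n:ℝ)+2) + |GG 2|) / Real.log t := by
      rw [add_div]; congr 1; rw [pow_succ]; field_simp; norm_num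
    _ ≤ _ := by linarith

lemma Mop_ge (n : ℕ) : ∃ t, TT n ≤ t ∧ 4 / (Real.exp 1 * Real.log 2) - er n ≤ Mop aF t := by
  have hl : 0 < Real.log 2 := Real.log_pos (by norm_num)
  have he1 := Real.exp_one_gt_d9
  have he2 := Real.exp_one_lt_d9
  have hp : (0:ℝ) < 2^n * Real.log 2 := by positivity
  have h1 : TT n ≤ Real.exp (2^n * Real.log 2 * (Real.exp 1 / 2)) := by
    rw [← Real.log_le_iff_le_exp (TT_pos n), log_TT]
    nlinarith
  have h2 : Real.exp (2^n * Real.log 2 * (Real.exp 1 / 2)) ≤ TT (n+1) := by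
    rw [← Real.le_log_iff_exp_le (TT_pos _), log_TT, pow_succ]
    nlinarith
  refine ⟨_, h1, ?_⟩
  have g := (GG_bd n _ h1 h2).2
  obtain ⟨ha, hb, hc⟩ := log_bd n _ h1
  rw [Real.log_exp] at g ha hb
  have e : 2 * (2^n * Real.log 2 * (Real.exp 1 / 2)) / (2^n * Real.log 2) = Real.exp 1 := by
    field_simp
  rw [e, Real.log_exp] at g
  rw [Mop_eq, Real.log_exp]
  have h4 : (8 * ((n:ℝ)+2) + |GG 2|) / (2^n * Real.log 2 * (Real.exp 1 / 2)) ≤ er n := by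
    unfold er; gcongr
  have h3 : (2:ℝ)^(n+1) - (8 * ((n:ℝ)+2) + |GG 2|) ≤
      GG (Real.exp (2^n * Real.log 2 * (Real.exp 1 / 2))) := by
    have := neg_abs_le (GG 2)
    linarith
  calc _ ≤ 4 / (Real.exp 1 * Real.log 2) -
        (8 * ((n:ℝ)+2) + |GG 2|) / (2^n * Real.log 2 * (Real.exp 1 / 2)) := by linarith
    _ = ((2:ℝ)^(n+1) - (8 * ((n:ℝ)+2) + |GG 2|)) / (2^n * Real.log 2 * (Real.exp 1 / 2)) := by
      rw [sub_div]; congr 1; rw [pow_succ]; field_simp; norm_num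
    _ ≤ _ := div_le_div_of_nonneg_right h3 hb.le

lemma TT_frequently {p : ℝ → Prop} (N : ℕ) (h : ∀ n, N ≤ n → ∃ t, TT n ≤ t ∧ p t) :
    ∃ᶠ t in atTop, p t := by
  rw [frequently_atTop]
  intro a
  obtain ⟨m, hm⟩ := pow_unbounded_of_one_lt a (show (1:ℝ) < 2 by norm_num)
  obtain ⟨t, ht, hp⟩ := h (N+m) (by omega)
  refine ⟨t, ?_, hp⟩
  have h2 := TT_ge_four (N+m)
  have h3 : (2:ℝ)^m ≤ 2^(N+m) := pow_le_pow_right₀ (by norm_num) (by omega)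
  have h4 : (1:ℝ) ≤ 2^(N+m) := one_le_pow₀ (by norm_num)
  nlinarith

lemma aF_le (n : ℕ) (t : ℝ) (h1 : TT n ≤ t) (h2 : t ≤ TT (n+1)) : aF t ≤ 6 := by
  obtain ⟨ha, hb, hc⟩ := log_bd n t h1
  have ht := (TT_ge n).trans h1
  have hT := TT_pos (n+1)
  have hl : Real.log t ≤ Real.log (1+t) := Real.log_le_log (by linarith) (by linarith)
  have hF := FF_le n t h1 h2
  have : (2:ℝ)^(n+1) * t / TT (n+1) ≤ 2^(n+1) := by
    rw [div_le_iff₀ hT]; gcongr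
  rw [aF_eq, div_le_iff₀ (by linarith)]
  linarith

lemma aF_TT (n : ℕ) : (2 * 2^n - 6) / (2^n * Real.log 2 + 1) - 0 ≤ aF (TT n) ∨ (2:ℝ)^n < 3 := by
  by_cases h : (2:ℝ)^n < 3
  · exact Or.inr h
  left
  push Not at h
  have hT := TT_ge n
  have hl : 0 < Real.log 2 := Real.log_pos (by norm_num)
  have hF := FF_ge n (TT n) le_rfl (TT_mono (Nat.le_succ n))
  have h1 := log_one_add_le (TT n) (TT_pos n)
  have h2 : 1 / TT n ≤ 1 := by rw [div_le_iff₀ (TT_pos n)]; linarith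
  rw [log_TT] at h1
  have h3 : 0 < Real.log (1 + TT n) := Real.log_pos (by linarith)
  rw [pow_succ] at hF
  rw [aF_eq, sub_zero]
  exact div_le_div₀ (by linarith) (by linarith) h3 (by linarith)

theorem limsup_avA_f0_gt_limsup_Mop :
    2 / Real.log 2 ≤ Filter.limsup aF Filter.atTop ∧
    Filter.limsup (Mop aF) Filter.atTop = 4 / (Real.exp 1 * Real.log 2) ∧
    4 / (Real.exp 1 * Real.log 2) < 2 / Real.log 2 ∧
    Filter.limsup (Mop aF) Filter.atTop < Filter.limsup aF Filter.atTop := by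
  have hl : 0 < Real.log 2 := Real.log_pos (by norm_num)
  have he1 := Real.exp_one_gt_d9
  have A : 2 / Real.log 2 ≤ Filter.limsup aF Filter.atTop := by
    have hb : IsBoundedUnder (· ≤ ·) atTop aF := by
      refine isBoundedUnder_of_eventually_le (a := 6) ?_
      filter_upwards [eventually_ge_atTop (TT 0)] with t ht
      obtain ⟨n, -, h1, h2⟩ := exists_TT 0 t ht
      exact aF_le n t h1 h2
    refine le_of_forall_pos_sub_le ?_
    intro ε hε
    refine le_limsup_of_frequently_le ?_ hb
    have h2 : Tendsto (fun n : ℕ => ((2:ℝ)^n)⁻¹) atTop (nhds 0) :=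
      tendsto_inv_atTop_zero.comp (tendsto_pow_atTop_atTop_of_one_lt (by norm_num))
    have h3 : Tendsto (fun n : ℕ => (2 * (2:ℝ)^n - 6) / (2^n * Real.log 2 + 1)) atTop
        (nhds (2 / Real.log 2)) := by
      have : Tendsto (fun n : ℕ => (2 - 6 * ((2:ℝ)^n)⁻¹) / (Real.log 2 + ((2:ℝ)^n)⁻¹)) atTop
        (nhds ((2 - 6 * 0) / (Real.log 2 + 0))) :=
        (tendsto_const_nhds.sub (h2.const_mul 6)).div (tendsto_const_nhds.add h2) (by simpa using hl.ne')
      simp only [mul_zero, sub_zero, add_zero] at this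
      refine this.congr ?_
      intro n
      field_simp
    have h4 := h3.eventually_const_lt (show 2 / Real.log 2 - ε < 2 / Real.log 2 by linarith)
    obtain ⟨N, hN⟩ := eventually_atTop.1 h4
    refine TT_frequently (N+2) ?_
    intro n hn
    refine ⟨TT n, le_rfl, ?_⟩
    have h5 : (2:ℝ)^2 ≤ 2^n := pow_le_pow_right₀ (by norm_num) (by omega)
    rcases aF_TT n with h | h
    · have := hN n (by omega)
      linarith
    · norm_num at h5; linarith
  have B : Filter.limsup (Mop aF) Filter.atTop = 4 / (Real.exp 1 * Real.log 2) := by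
    have hup : ∀ ε > 0, ∀ᶠ t in atTop, Mop aF t ≤ 4 / (Real.exp 1 * Real.log 2) + ε := by
      intro ε hε
      obtain ⟨N, hN⟩ := eventually_atTop.1 (er_tendsto.eventually_lt_const hε)
      filter_upwards [eventually_ge_atTop (TT N)] with t ht
      obtain ⟨n, hn, h1, h2⟩ := exists_TT N t ht
      linarith [Mop_le n t h1 h2, hN n hn]
    have hlow : ∀ ε > 0, ∃ᶠ t in atTop, 4 / (Real.exp 1 * Real.log 2) - ε ≤ Mop aF t := by
      intro ε hε
      obtain ⟨N, hN⟩ := eventually_atTop.1 (er_tendsto.eventually_lt_const hε)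
      refine TT_frequently N ?_
      intro n hn
      obtain ⟨t, h1, h2⟩ := Mop_ge n
      exact ⟨t, h1, by linarith [hN n hn]⟩
    apply le_antisymm
    · refine le_of_forall_pos_le_add ?_
      intro ε hε
      exact limsup_le_of_le (IsCoboundedUnder.of_frequently_ge (hlow 1 one_pos)) (hup ε hε)
    · refine le_of_forall_pos_sub_le ?_
      intro ε hε
      exact le_limsup_of_frequently_le (hlow ε hε) (isBoundedUnder_of_eventually_le (hup 1 one_pos))
  have C : 4 / (Real.exp 1 * Real.log 2) < 2 / Real.log 2 := by
    rw [div_lt_div_iff₀ (by positivity) hl]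
    nlinarith
  exact ⟨A, B, C, by rw [B]; linarith⟩
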